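/- If the minimum number of 2-swaps transforming w into v corresponds to a cycle cover 𝒞 of the 2-swap graph G(w,v), then the cycles of 𝒞 must be pairwise vertex-disjoint. -/

import Mathlib

/-- The Parikh vector of a word `w : Fin n → Fin σ`. -/
def parikh {n σ : ℕ} (w : Fin n → Fin σ) : Fin σ → ℕ :=
  fun a => (Finset.univ.filter fun i => w i = a).card

/-- Words of length `n` over alphabet `Fin σ` with Parikh vector `P`. -/
abbrev Words (n σ : ℕ) (P : Fin σ → ℕ) := {w : Fin n → Fin σ // parikh w = P}

/-- `u` is obtained from `w` by a single 2-swap. -/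
def isSwap {n σ : ℕ} (w u : Fin n → Fin σ) : Prop :=
  ∃ i j : Fin n, i ≠ j ∧ w i ≠ w j ∧ u = w ∘ Equiv.swap i j

/-- The configuration graph `G(P)`. -/
def configGraph (n σ : ℕ) (P : Fin σ → ℕ) : SimpleGraph (Words n σ P) :=
  SimpleGraph.fromRel fun w u => isSwap w.1 u.1

/-- `isSwapChain w l v`: the list of 2-swaps `l`, applied in order to `w`, is a
valid sequence of 2-swaps (each exchanging two positions holding distinct symbols)
transforming `w` into `v`. -/
def isSwapChain {n σ : ℕ} : (Fin n → Fin σ) → List (Fin n × Fin n) → (Fin n → Fin σ) → Prop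
  | w, [], v => w = v
  | w, s :: l, v => s.1 ≠ s.2 ∧ w s.1 ≠ w s.2 ∧ isSwapChain (w ∘ Equiv.swap s.1 s.2) l v

/-- The minimum number of 2-swaps transforming `w` into `v`. -/
noncomputable def swapDist {n σ : ℕ} (w v : Fin n → Fin σ) : ℕ :=
  sInf {k | ∃ l : List (Fin n × Fin n), l.length = k ∧ isSwapChain w l v}

/-- `c` is a (directed) cycle in the 2-swap graph `G(w,v)`: a nonempty duplicate-free
list of positions where each consecutive pair (cyclically) `(i, j)` satisfies `w i = v j`. -/
def IsSwapCycle {n σ : ℕ} (w v : Fin n → Fin σ) (c : List (Fin n)) : Prop :=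
  c ≠ [] ∧ c.Nodup ∧ ∀ p ∈ c.zip (c.rotate 1), w p.1 = v p.2

/-- `𝒞` is a cycle cover of the 2-swap graph `G(w,v)`. -/
def IsCycleCover {n σ : ℕ} (w v : Fin n → Fin σ) (𝒞 : Finset (List (Fin n))) : Prop :=
  (∀ c ∈ 𝒞, IsSwapCycle w v c) ∧ ∀ i : Fin n, ∃ c ∈ 𝒞, i ∈ c

/-- `v` can be reached from `w` by at most `k` valid 2-swaps. -/
def SwapReach {n σ : ℕ} (k : ℕ) (w v : Fin n → Fin σ) : Prop :=
  ∃ l : List (Fin n × Fin n), l.length ≤ k ∧ isSwapChain w l v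

theorem isSwapChain.append {n σ : ℕ} {w u v : Fin n → Fin σ} {l m : List (Fin n × Fin n)}
    (h : isSwapChain w l u) (h' : isSwapChain u m v) : isSwapChain w (l ++ m) v := by
  induction l generalizing w with
  | nil =>
    have hw : w = u := h
    subst hw
    exact h'
  | cons s l ih => exact ⟨h.1, h.2.1, ih h.2.2⟩

theorem parikh_comp_perm {n σ : ℕ} (w : Fin n → Fin σ) (e : Equiv.Perm (Fin n)) :
    parikh (w ∘ e) = parikh w := by
  funext a
  exact Finset.card_equiv e (by simp)

theorem isSwapChain.parikh_eq {n σ : ℕ} {w v : Fin n → Fin σ} {l : List (Fin n × Fin n)}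
    (h : isSwapChain w l v) : parikh w = parikh v := by
  induction l generalizing w with
  | nil => exact congrArg parikh h
  | cons s l ih => rw [← ih h.2.2, parikh_comp_perm]

namespace SwapReach

theorem refl {n σ : ℕ} (w : Fin n → Fin σ) : SwapReach 0 w w := ⟨[], le_rfl, rfl⟩

theorem mono {n σ j k : ℕ} {w v : Fin n → Fin σ} (h : SwapReach j w v) (hjk : j ≤ k) :
    SwapReach k w v := by
  obtain ⟨l, hl, hc⟩ := h
  exact ⟨l, hl.trans hjk, hc⟩

theorem trans {n σ j k : ℕ} {w u v : Fin n → Fin σ} (h : SwapReach j w u)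
    (h' : SwapReach k u v) : SwapReach (j + k) w v := by
  obtain ⟨l, hl, hc⟩ := h
  obtain ⟨m, hm, hd⟩ := h'
  exact ⟨l ++ m, by simp only [List.length_append]; omega, hc.append hd⟩

theorem parikh_eq {n σ k : ℕ} {w v : Fin n → Fin σ} (h : SwapReach k w v) :
    parikh w = parikh v := by
  obtain ⟨l, -, hc⟩ := h
  exact hc.parikh_eq

theorem swapDist_le {n σ k : ℕ} {w v : Fin n → Fin σ} (h : SwapReach k w v) :
    swapDist w v ≤ k := by
  obtain ⟨l, hl, hc⟩ := h
  exact le_trans (Nat.sInf_le ⟨l, rfl, hc⟩) hl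

theorem swap {n σ : ℕ} (w : Fin n → Fin σ) (i j : Fin n) :
    SwapReach 1 w (w ∘ Equiv.swap i j) := by
  by_cases h : w i = w j
  · have hw : w ∘ Equiv.swap i j = w := by
      funext x
      simp only [Function.comp_apply, Equiv.swap_apply_def]
      split_ifs <;> simp_all
    rw [hw]
    exact (refl w).mono zero_le_one
  · exact ⟨[(i, j)], le_rfl, fun hij => h (congrArg w hij), h, rfl⟩

/-- Words with equal Parikh vectors differing in `d` positions are at most `d - 1` swaps apart. -/
theorem of_parikh_eq {n σ : ℕ} {w v : Fin n → Fin σ} (h : parikh w = parikh v) :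
    SwapReach ((Finset.univ.filter fun i => w i ≠ v i).card - 1) w v := by
  induction hd : (Finset.univ.filter fun i => w i ≠ v i).card using Nat.strong_induction_on
    generalizing w with
  | _ d ih =>
  by_cases hwv : w = v
  · subst hwv
    exact (refl w).mono (Nat.zero_le _)
  obtain ⟨i, hi⟩ := Function.ne_iff.mp hwv
  obtain ⟨j, hj, hjv⟩ : ∃ j, w j = v i ∧ w j ≠ v j := by
    by_contra! hno
    have hss : (Finset.univ.filter fun j => w j = v i) ⊂
        (Finset.univ.filter fun j => v j = v i) := by
      refine Finset.ssubset_iff_of_subset ?_ |>.mpr ⟨i, by simp, by simpa using hi⟩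
      intro j hj
      simp only [Finset.mem_filter, Finset.mem_univ, true_and] at hj ⊢
      rw [← hno j hj, hj]
    exact (Finset.card_lt_card hss).ne (congrFun h (v i))
  have hij : i ≠ j := fun e => hi (by rw [← hj, e])
  have hsub : (Finset.univ.filter fun x => (w ∘ Equiv.swap i j) x ≠ v x) ⊆
      (Finset.univ.filter fun x => w x ≠ v x).erase i := by
    intro x hx
    simp only [Finset.mem_filter, Finset.mem_univ, true_and, Function.comp_apply,
      Finset.mem_erase] at hx ⊢
    by_cases hxi : x = i
    · subst hxi
      simp [hj] at hx
    · by_cases hxj : x = j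
      · subst hxj
        exact ⟨hxi, hjv⟩
      · rw [Equiv.swap_apply_of_ne_of_ne hxi hxj] at hx
        exact ⟨hxi, hx⟩
  have htwo : 1 < (Finset.univ.filter fun x => w x ≠ v x).card :=
    Finset.one_lt_card.mpr ⟨i, by simpa using hi, j, by simpa using hjv, hij⟩
  have hle := Finset.card_le_card hsub
  rw [Finset.card_erase_of_mem (by simpa using hi)] at hle
  refine ((swap w i j).trans (ih _ (by omega) ((parikh_comp_perm w _).trans h) rfl)).mono ?_
  omega

/-- A path `a :: t` ending in an edge to `z` is resolved by `t.length` swaps. -/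
theorem exists_of_path {n σ : ℕ} (v : Fin n → Fin σ) (a z : Fin n) (t : List (Fin n))
    (w : Fin n → Fin σ) (hnd : (a :: t).Nodup)
    (h : ∀ p ∈ (a :: t).zip (t ++ [z]), w p.1 = v p.2) :
    ∃ u, SwapReach t.length w u ∧ u a = v z ∧ (∀ i ∈ t, u i = v i) ∧
      ∀ i, i ∉ a :: t → u i = w i := by
  induction t generalizing w with
  | nil => exact ⟨w, refl w, by simpa using h, by simp, fun _ _ => rfl⟩
  | cons b t ih =>
    simp only [List.nodup_cons, List.mem_cons, not_or] at hnd
    obtain ⟨⟨hab, hat⟩, hbt, ht⟩ := hnd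
    obtain ⟨y, s, hs⟩ : ∃ y s, t ++ [z] = y :: s := List.exists_cons_of_ne_nil (by simp)
    simp only [List.cons_append, hs, List.zip_cons_cons, List.mem_cons, forall_eq_or_imp] at h
    obtain ⟨hb, hy, hp⟩ := h
    obtain ⟨u, hu, hua, hut, hout⟩ := ih (w ∘ Equiv.swap a b)
      (List.nodup_cons.mpr ⟨hat, ht⟩) (by
        rw [hs]
        simp only [List.zip_cons_cons, List.mem_cons, forall_eq_or_imp]
        refine ⟨by simpa using hy, fun p hpm => ?_⟩
        have hpt := (List.of_mem_zip (a := p.1) (b := p.2) hpm).1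
        rw [Function.comp_apply, Equiv.swap_apply_of_ne_of_ne
          (ne_of_mem_of_not_mem hpt hat) (ne_of_mem_of_not_mem hpt hbt)]
        exact hp p hpm)
    refine ⟨u, ((swap w a b).trans hu).mono (by simp; omega), hua, ?_, ?_⟩
    · simp only [List.mem_cons, forall_eq_or_imp]
      refine ⟨?_, hut⟩
      rw [hout b (by simp [Ne.symm hab, hbt])]
      simpa using hb
    · intro i hi
      simp only [List.mem_cons, not_or] at hi
      rw [hout i (by simp [hi]), Function.comp_apply,
        Equiv.swap_apply_of_ne_of_ne hi.1 hi.2.1]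

theorem exists_of_cycle {n σ : ℕ} {w v : Fin n → Fin σ} {c : List (Fin n)}
    (h : IsSwapCycle w v c) :
    ∃ u, SwapReach (c.length - 1) w u ∧ (∀ i ∈ c, u i = v i) ∧ ∀ i, i ∉ c → u i = w i := by
  obtain ⟨hne, hnd, hz⟩ := h
  obtain ⟨a, t, rfl⟩ := List.exists_cons_of_ne_nil hne
  obtain ⟨u, hu, hua, hut, hout⟩ := exists_of_path v a a t w hnd (by simpa using hz)
  exact ⟨u, by simpa using hu, by simpa using ⟨hua, hut⟩, hout⟩

theorem exists_of_disjoint_cycles {n σ : ℕ} {w v : Fin n → Fin σ} (D : Finset (List (Fin n)))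
    (hcyc : ∀ c ∈ D, IsSwapCycle w v c) (hdis : (D : Set (List (Fin n))).Pairwise List.Disjoint) :
    ∃ u, SwapReach (∑ c ∈ D, (c.length - 1)) w u ∧ (∀ c ∈ D, ∀ i ∈ c, u i = v i) ∧
      ∀ i, (∀ c ∈ D, i ∉ c) → u i = w i := by
  induction D using Finset.induction_on with
  | empty => exact ⟨w, by simpa using refl w, by simp, by simp⟩
  | insert a s ha ih =>
    obtain ⟨u, hu, hin, hout⟩ := ih (fun c hc => hcyc c (Finset.mem_insert_of_mem hc))
      (hdis.mono (by simp))
    have had : ∀ c ∈ s, ∀ i ∈ c, i ∉ a := fun c hc i hic hia =>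
      hdis (x := a) (y := c) (by simp) (by simp [hc]) (fun e => ha (e ▸ hc)) hia hic
    obtain ⟨hne, hnd, hz⟩ := hcyc a (Finset.mem_insert_self a s)
    have hcyc' : IsSwapCycle u v a := by
      refine ⟨hne, hnd, fun p hp => ?_⟩
      have hpa := (List.of_mem_zip (a := p.1) (b := p.2) hp).1
      rw [hout p.1 fun c hc hpc => had c hc _ hpc hpa]
      exact hz p hp
    obtain ⟨u', hu', hin', hout'⟩ := exists_of_cycle hcyc'
    refine ⟨u', (hu.trans hu').mono (by rw [Finset.sum_insert ha, add_comm]), ?_, ?_⟩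
    · simp only [Finset.mem_insert, forall_eq_or_imp]
      refine ⟨hin', fun c hc i hic => ?_⟩
      rw [hout' i (had c hc i hic), hin c hc i hic]
    · intro i hi
      simp only [Finset.mem_insert, forall_eq_or_imp] at hi
      rw [hout' i hi.1, hout i hi.2]

end SwapReach

theorem parikh_eq_of_swapDist_ne_zero {n σ : ℕ} {w v : Fin n → Fin σ} (h : swapDist w v ≠ 0) :
    parikh w = parikh v := by
  obtain ⟨k, l, -, hl⟩ := Nat.nonempty_of_sInf_eq_succ (Nat.succ_pred_eq_of_ne_zero h).symm
  exact hl.parikh_eq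

/-- A finite family of lists has a maximal pairwise disjoint subfamily containing all lists of
length one. -/
theorem exists_maximal_pairwise_disjoint {α : Type*} (C : Finset (List α)) :
    ∃ D ⊆ C, (D : Set (List α)).Pairwise List.Disjoint ∧ (∀ c ∈ C, c.length = 1 → c ∈ D) ∧
      ∀ c ∈ C, c ∉ D → ∃ d ∈ D, ∃ i ∈ d, i ∈ c := by
  classical
  let F : Finset (Finset (List α)) := C.powerset.filter fun D => (D : Set (List α)).Pairwise List.Disjoint
  have hF : C.filter (fun c => c.length = 1) ∈ F := by
    simp only [F, Finset.mem_filter, Finset.mem_powerset]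
    refine ⟨Finset.filter_subset _ _, fun c hc d hd hcd => ?_⟩
    simp only [Finset.coe_filter, Set.mem_ofPred_eq, List.length_eq_one_iff] at hc hd
    obtain ⟨-, x, rfl⟩ := hc
    obtain ⟨-, y, rfl⟩ := hd
    simpa [eq_comm] using hcd
  obtain ⟨D, hle, hmax⟩ := F.exists_le_maximal hF
  have hD := hmax.prop
  simp only [F, Finset.mem_filter, Finset.mem_powerset] at hD
  refine ⟨D, hD.1, hD.2, fun c hc h1 => hle (by simp [hc, h1]), fun c hc hcD => ?_⟩
  by_contra! hno
  have hins : insert c D ∈ F := by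
    simp only [F, Finset.mem_filter, Finset.mem_powerset]
    refine ⟨Finset.insert_subset hc hD.1, ?_⟩
    rw [Finset.coe_insert]
    exact hD.2.insert fun d hd _ =>
      ⟨fun i hic hid => hno d hd i hid hic, fun i hid hic => hno d hd i hid hic⟩
  exact hcD (hmax.le_of_ge hins (Finset.subset_insert c D) (Finset.mem_insert_self c D))

theorem stmt14 (n σ : ℕ) (w v : Fin n → Fin σ) (𝒞 : Finset (List (Fin n)))
    (hcov : IsCycleCover w v 𝒞)
    (hmin : ∑ c ∈ 𝒞, (c.length - 1) = swapDist w v) :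
    ∀ c₁ ∈ 𝒞, ∀ c₂ ∈ 𝒞, c₁ ≠ c₂ → ∀ i : Fin n, i ∈ c₁ → i ∉ c₂ := by
  obtain ⟨hcyc, hall⟩ := hcov
  obtain ⟨D, hDC, hdis, hone, hmeet⟩ := exists_maximal_pairwise_disjoint 𝒞
  suffices hE : 𝒞 \ D = ∅ by
    have hCD : 𝒞 ⊆ D := Finset.sdiff_eq_empty_iff_subset.mp hE
    exact fun c₁ h₁ c₂ h₂ hne i hi₁ hi₂ => hdis (hCD h₁) (hCD h₂) hne hi₁ hi₂
  by_contra hE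
  have hsum := Finset.sum_sdiff (f := fun c : List (Fin n) => c.length - 1) hDC
  have hpos : 0 < ∑ c ∈ 𝒞 \ D, (c.length - 1) := by
    obtain ⟨c, hc⟩ := Finset.nonempty_iff_ne_empty.mpr hE
    refine Finset.sum_pos' (fun _ _ => Nat.zero_le _) ⟨c, hc, ?_⟩
    rw [Finset.mem_sdiff] at hc
    have h0 := List.length_pos_iff.mpr (hcyc c hc.1).1
    have h1 : c.length ≠ 1 := fun h => hc.2 (hone c hc.1 h)
    omega
  obtain ⟨u, hu, hin, -⟩ :=
    SwapReach.exists_of_disjoint_cycles D (fun c hc => hcyc c (hDC hc)) hdis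
  have hpar : parikh u = parikh v :=
    hu.parikh_eq.symm.trans (parikh_eq_of_swapDist_ne_zero (by omega))
  have hcard : (Finset.univ.filter fun i => u i ≠ v i).card ≤
      ∑ c ∈ 𝒞 \ D, (c.length - 1) := by
    have hsub : (Finset.univ.filter fun i => u i ≠ v i) ⊆
        (𝒞 \ D).biUnion fun c => c.toFinset.filter fun i => u i ≠ v i := by
      intro i hi
      obtain ⟨c, hc, hic⟩ := hall i
      simp only [Finset.mem_filter, Finset.mem_univ, true_and] at hi
      simp only [Finset.mem_biUnion, Finset.mem_sdiff, Finset.mem_filter, List.mem_toFinset]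
      exact ⟨c, ⟨hc, fun hcD => hi (hin c hcD i hic)⟩, hic, hi⟩
    refine (Finset.card_le_card hsub).trans (Finset.card_biUnion_le.trans ?_)
    refine Finset.sum_le_sum fun c hc => ?_
    rw [Finset.mem_sdiff] at hc
    obtain ⟨d, hd, i, hid, hic⟩ := hmeet c hc.1 hc.2
    have hlt : (c.toFinset.filter fun i => u i ≠ v i).card < c.toFinset.card :=
      Finset.card_lt_card (Finset.filter_ssubset.mpr
        ⟨i, List.mem_toFinset.mpr hic, not_not.mpr (hin d hd i hid)⟩)
    have := c.toFinset_card_le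
    omega
  have hle := (hu.trans (SwapReach.of_parikh_eq hpar)).swapDist_le
  omega
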